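/- arXiv:2202.01754 — 2 statements merged into one kernel-verified Lean document; each statement's English description precedes it below -/
import Mathlib

section
/- Let φ, χ : (0, 1] → ℂ both be continuously differentiable, assume that the maps s ↦ s³φ′(s) and s ↦ s³χ′(s) are continuously differentiable on (0, 1], and assume the integrability conditions ∫₀¹ s³|φ(s)|² ds < ∞, ∫₀¹ s⁻³ |(d/ds)(s³φ′(s))|² ds < ∞, ∫₀¹ s³|χ(s)|² ds < ∞, and ∫₀¹ s⁻³ |(d/ds)(s³χ′(s))|² ds < ∞. Then lim_{s→0⁺} ( s³φ′(s)·conj(χ(s)) − φ(s)·s³·conj(χ′(s)) ) = 0. -/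
/-!
Let `p = s^α φ'` be the quasi-derivative. Square integrability of `p'` with weight `s^(-α)` makes
`p' = g` integrable at `0`, so `p` has a limit `p₀` there, with an error `O(s^((α+1)/2))` by
Young's inequality. Integrating `φ' = s^(-α) p` gives `φ = v s^(1-α) + O(s^((1-α)/2))` with
`(1 - α) v = p₀`. For `α ≥ 3` the function `s^(1-α)` is not square integrable with weight `s^α`, so
`v = 0`; the bracket is then `O(s^((α+1)/2)) O(s^((1-α)/2)) = O(s)`.
-/

open Set MeasureTheory Filter

/-- `φ : (0,1] → ℂ` is continuously differentiable with derivative `φ₁`, the map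
`s ↦ s³ φ₁ s` is continuously differentiable with derivative `g`, and both `φ` and
`s ↦ s⁻³ g s` belong to the weighted space `L²((0,1), s³ ds)` (a smooth-representative
version of the domain of the singular Sturm–Liouville operator `T`). -/
def MemDomT (φ φ₁ g : ℝ → ℂ) : Prop :=
  (∀ s ∈ Ioc (0:ℝ) 1, HasDerivWithinAt φ (φ₁ s) (Ioc 0 1) s) ∧
  ContinuousOn φ₁ (Ioc 0 1) ∧
  (∀ s ∈ Ioc (0:ℝ) 1, HasDerivWithinAt (fun t : ℝ => (t:ℂ) ^ 3 * φ₁ t) (g s) (Ioc 0 1) s) ∧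
  ContinuousOn g (Ioc 0 1) ∧
  IntegrableOn (fun s => s ^ 3 * ‖φ s‖ ^ 2) (Ioc 0 1) ∧
  IntegrableOn (fun s => (s ^ 3)⁻¹ * ‖g s‖ ^ 2) (Ioc 0 1)

open scoped Topology
open Asymptotics

theorem integrableAtFilter_nhdsGT_iff {X E : Type*} [TopologicalSpace X] [LinearOrder X]
    [OrderTopology X] [NoMaxOrder X] [DenselyOrdered X] [MeasurableSpace X]
    [NormedAddCommGroup E] {μ : Measure X} {f : X → E} {a : X} :
    IntegrableAtFilter f (𝓝[>] a) μ ↔ ∃ b > a, IntegrableOn f (Ioc a b) μ := by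
  constructor
  · rintro ⟨t, ht, hft⟩
    obtain ⟨b, hab, hb⟩ := mem_nhdsGT_iff_exists_Ioc_subset.1 ht
    exact ⟨b, hab, hft.mono_set hb⟩
  · rintro ⟨b, hab, hf⟩
    exact ⟨Ioc a b, Ioc_mem_nhdsGT hab, hf⟩

theorem integrableAtFilter_rpow_nhdsGT_zero_iff {β : ℝ} :
    IntegrableAtFilter (fun s : ℝ => s ^ β) (𝓝[>] 0) ↔ -1 < β := by
  rw [integrableAtFilter_nhdsGT_iff]
  constructor
  · rintro ⟨b, hb, h⟩
    exact (intervalIntegral.integrableOn_Ioo_rpow_iff hb).1 (h.mono_set Ioo_subset_Ioc_self)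
  · intro hβ
    exact ⟨1, one_pos, (intervalIntegral.intervalIntegrable_rpow' hβ).1⟩

theorem le_add_inv_mul_sq {𝕜 : Type*} [Field 𝕜] [LinearOrder 𝕜] [IsStrictOrderedRing 𝕜] {w : 𝕜}
    (hw : 0 < w) (x : 𝕜) : x ≤ w + w⁻¹ * x ^ 2 := by
  have key : w + w⁻¹ * x ^ 2 - x = w⁻¹ * ((w - x / 2) ^ 2 + 3 / 4 * x ^ 2) := by
    field_simp
    ring
  have : 0 ≤ w⁻¹ * ((w - x / 2) ^ 2 + 3 / 4 * x ^ 2) := by positivity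
  linarith

section

variable {E : Type*} [NormedAddCommGroup E]

/-- `f` belongs to the weighted space `L²(s ^ α ds)` near `0⁺`, apart from measurability of `f`,
which is not part of the condition. -/
def SqIntegrableAtZero (α : ℝ) (f : ℝ → E) : Prop :=
  IntegrableAtFilter (fun s => s ^ α * ‖f s‖ ^ 2) (𝓝[>] 0)

theorem SqIntegrableAtZero.integrableAtFilter {α : ℝ} {g : ℝ → E} (hα : -1 < α)
    (hg : SqIntegrableAtZero (-α) g) (hgm : StronglyMeasurableAtFilter g (𝓝[>] 0)) :
    IntegrableAtFilter g (𝓝[>] 0) := by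
  have hdom := (integrableAtFilter_rpow_nhdsGT_zero_iff.2 hα).add hg
  refine IsBigO.integrableAtFilter (IsBigO.of_norm_eventuallyLE ?_) hgm hdom
  filter_upwards [self_mem_nhdsWithin] with s hs
  simpa only [Pi.add_apply, Real.rpow_neg (le_of_lt hs)] using
    le_add_inv_mul_sq (Real.rpow_pos_of_pos hs α) ‖g s‖

theorem SqIntegrableAtZero.of_sub_isBigO {F : Type*} [NormedAddCommGroup F] {α : ℝ}
    {f φ : ℝ → E} {r : ℝ → F} (hφ : SqIntegrableAtZero α φ)
    (hf : StronglyMeasurableAtFilter f (𝓝[>] 0)) (hr : SqIntegrableAtZero α r)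
    (h : (fun s => φ s - f s) =O[𝓝[>] 0] r) : SqIntegrableAtZero α f := by
  obtain ⟨C, hC⟩ := h.bound
  have hdom : IntegrableAtFilter (fun s => s ^ α * ‖φ s‖ ^ 2 + C ^ 2 * (s ^ α * ‖r s‖ ^ 2))
      (𝓝[>] 0) := hφ.add (hr.smul (C ^ 2))
  have hfm : StronglyMeasurableAtFilter (fun s => s ^ α * ‖f s‖ ^ 2) (𝓝[>] 0) := by
    obtain ⟨t, ht, hft⟩ := hf
    exact ⟨t, ht, (measurable_id.pow_const α).aestronglyMeasurable.mul (hft.norm.pow 2)⟩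
  refine IsBigO.integrableAtFilter (IsBigO.of_bound 2 ?_) hfm hdom
  filter_upwards [hC, self_mem_nhdsWithin] with s hs hs0
  have hpow : 0 ≤ s ^ α := Real.rpow_nonneg (le_of_lt hs0) α
  rw [Real.norm_of_nonneg (by positivity), Real.norm_of_nonneg (by positivity)]
  calc s ^ α * ‖f s‖ ^ 2 ≤ s ^ α * (‖φ s‖ + C * ‖r s‖) ^ 2 := by
        gcongr
        exact (norm_le_norm_add_norm_sub _ _).trans (by gcongr)
    _ ≤ s ^ α * (2 * (‖φ s‖ ^ 2 + (C * ‖r s‖) ^ 2)) := by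
        gcongr
        exact add_sq_le
    _ = 2 * (s ^ α * ‖φ s‖ ^ 2 + C ^ 2 * (s ^ α * ‖r s‖ ^ 2)) := by ring

variable [NormedSpace ℝ E]

theorem norm_integral_le_rpow_mul {α s : ℝ} {g : ℝ → E} (hα : -1 < α) (hs : 0 < s)
    (hg : IntervalIntegrable (fun t => t ^ (-α) * ‖g t‖ ^ 2) volume 0 s) :
    ‖∫ t in (0 : ℝ)..s, g t‖ ≤
      s ^ ((α + 1) / 2) * ((α + 1)⁻¹ + ∫ t in (0 : ℝ)..s, t ^ (-α) * ‖g t‖ ^ 2) := by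
  -- With this parameter the two terms of Young's inequality have the same order after integration.
  set k := s ^ ((α + 1) / 2) with hk
  have hk0 : 0 < k := Real.rpow_pos_of_pos hs _
  have hksq : s ^ (α + 1) = k * k := by rw [hk, ← Real.rpow_add hs, add_halves]
  have young : ∀ t ∈ Ioc 0 s, ‖g t‖ ≤ k⁻¹ * t ^ α + k * (t ^ (-α) * ‖g t‖ ^ 2) := by
    intro t ht
    have ht0 : 0 < t ^ α := Real.rpow_pos_of_pos ht.1 α
    refine (le_add_inv_mul_sq (mul_pos (inv_pos.2 hk0) ht0) ‖g t‖).trans_eq ?_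
    rw [Real.rpow_neg ht.1.le, mul_inv, inv_inv, mul_assoc k]
  have hpow : IntervalIntegrable (fun t : ℝ => t ^ α) volume 0 s :=
    intervalIntegral.intervalIntegrable_rpow' hα
  calc ‖∫ t in (0 : ℝ)..s, g t‖
      ≤ ∫ t in (0 : ℝ)..s, (k⁻¹ * t ^ α + k * (t ^ (-α) * ‖g t‖ ^ 2)) :=
        intervalIntegral.norm_integral_le_of_norm_le hs.le (Eventually.of_forall young)
          ((hpow.const_mul _).add (hg.const_mul _))
    _ = k⁻¹ * (k * k / (α + 1)) + k * ∫ t in (0 : ℝ)..s, t ^ (-α) * ‖g t‖ ^ 2 := by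
        rw [intervalIntegral.integral_add (hpow.const_mul _) (hg.const_mul _),
          intervalIntegral.integral_const_mul, intervalIntegral.integral_const_mul,
          integral_rpow (Or.inl hα), Real.zero_rpow (by linarith), sub_zero, hksq]
    _ = k * ((α + 1)⁻¹ + ∫ t in (0 : ℝ)..s, t ^ (-α) * ‖g t‖ ^ 2) := by
        field_simp

theorem SqIntegrableAtZero.isBigO_integral {α : ℝ} {g : ℝ → E} (hα : -1 < α)
    (hg : SqIntegrableAtZero (-α) g) :
    (fun s => ∫ t in (0 : ℝ)..s, g t) =O[𝓝[>] 0] fun s : ℝ => s ^ ((α + 1) / 2) := by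
  obtain ⟨c, hc, hgc⟩ := integrableAtFilter_nhdsGT_iff.1 hg
  have hint : IntervalIntegrable (fun t => t ^ (-α) * ‖g t‖ ^ 2) volume 0 c :=
    (intervalIntegrable_iff_integrableOn_Ioc_of_le (le_of_lt hc)).2 hgc
  refine IsBigO.of_bound ((α + 1)⁻¹ + ∫ t in (0 : ℝ)..c, t ^ (-α) * ‖g t‖ ^ 2) ?_
  filter_upwards [Ioc_mem_nhdsGT hc] with s hs
  have hmono : ∫ t in (0 : ℝ)..s, t ^ (-α) * ‖g t‖ ^ 2 ≤
      ∫ t in (0 : ℝ)..c, t ^ (-α) * ‖g t‖ ^ 2 := by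
    refine intervalIntegral.integral_mono_interval le_rfl hs.1.le hs.2 ?_ hint
    filter_upwards [ae_restrict_mem measurableSet_Ioc] with t ht
    exact mul_nonneg (Real.rpow_nonneg ht.1.le _) (sq_nonneg _)
  have hpow : 0 ≤ s ^ ((α + 1) / 2) := Real.rpow_nonneg hs.1.le _
  rw [Real.norm_of_nonneg hpow, mul_comm]
  refine (norm_integral_le_rpow_mul hα hs.1 (hint.mono_set ?_)).trans (by gcongr)
  exact uIcc_subset_uIcc_left (Icc_subset_uIcc (Ioc_subset_Icc_self hs))

theorem exists_eventually_eq_add_integral [CompleteSpace E] {p g : ℝ → E} {a : ℝ}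
    (hp : ∀ᶠ s in 𝓝[>] a, HasDerivAt p (g s) s) (hg : IntegrableAtFilter g (𝓝[>] a)) :
    ∃ p₀ : E, ∀ᶠ s in 𝓝[>] a, p s = p₀ + ∫ t in a..s, g t := by
  obtain ⟨b, hab, hgb⟩ := integrableAtFilter_nhdsGT_iff.1 hg
  obtain ⟨c, hac, hpc⟩ := mem_nhdsGT_iff_exists_Ioc_subset.1 (hp.and (Ioc_mem_nhdsGT hab))
  have hint : ∀ x ∈ Icc a c, ∀ y ∈ Icc a c, IntervalIntegrable g volume x y := by
    intro x hx y hy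
    have hgac : IntervalIntegrable g volume a c :=
      (intervalIntegrable_iff_integrableOn_Ioc_of_le (le_of_lt hac)).2
        (hgb.mono_set (Ioc_subset_Ioc_right (hpc ⟨hac, le_rfl⟩).2.2))
    exact hgac.mono_set (uIcc_subset_uIcc (Icc_subset_uIcc hx) (Icc_subset_uIcc hy))
  refine ⟨p c - ∫ t in a..c, g t, ?_⟩
  filter_upwards [Ioc_mem_nhdsGT hac] with s hs
  have hs' : s ∈ Icc a c := Ioc_subset_Icc_self hs
  have hc' : c ∈ Icc a c := right_mem_Icc.2 (le_of_lt hac)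
  have hftc : ∫ t in s..c, g t = p c - p s := by
    refine intervalIntegral.integral_eq_sub_of_hasDerivAt (fun x hx => ?_) (hint s hs' c hc')
    rw [uIcc_of_le hs.2] at hx
    exact (hpc ⟨hs.1.trans_le hx.1, hx.2⟩).1
  rw [← intervalIntegral.integral_add_adjacent_intervals
    (hint a (left_mem_Icc.2 (le_of_lt hac)) s hs') (hint s hs' c hc'), hftc]
  abel

theorem isBigO_rpow_of_hasDerivAt {f f' : ℝ → E} {β : ℝ} (hβ : β ≤ 0)
    (hf : ∀ᶠ s in 𝓝[>] 0, HasDerivAt f (f' s) s)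
    (hf' : f' =O[𝓝[>] 0] fun s : ℝ => s ^ β) :
    f =O[𝓝[>] 0] fun s : ℝ => s ^ β := by
  obtain ⟨C, hC, hbound⟩ := hf'.exists_pos
  obtain ⟨c, hc, hfc⟩ := mem_nhdsGT_iff_exists_Ioc_subset.1 (hf.and hbound.bound)
  have hc0 : 0 < c := hc
  have hcβ : 0 < c ^ β := Real.rpow_pos_of_pos hc0 β
  refine IsBigO.of_bound (C * c + ‖f c‖ / c ^ β) ?_
  filter_upwards [Ioc_mem_nhdsGT hc] with s hs
  have hs0 : 0 < s := hs.1
  have hsub : Icc s c ⊆ Ioc 0 c := fun x hx => ⟨hs0.trans_le hx.1, hx.2⟩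
  have hderiv : ∀ x ∈ Icc s c, ‖f' x‖ ≤ C * s ^ β := by
    intro x hx
    have hx0 : 0 < x := (hsub hx).1
    refine (hfc (hsub hx)).2.trans ?_
    rw [Real.norm_of_nonneg (Real.rpow_nonneg hx0.le β)]
    exact mul_le_mul_of_nonneg_left (Real.rpow_le_rpow_of_nonpos hs0 hx.1 hβ) hC.le
  have hmvt : ‖f s - f c‖ ≤ C * s ^ β * ‖s - c‖ :=
    Convex.norm_image_sub_le_of_norm_hasDerivWithin_le
      (fun x hx => (hfc (hsub hx)).1.hasDerivWithinAt) hderiv (convex_Icc s c)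
      (right_mem_Icc.2 hs.2) (left_mem_Icc.2 hs.2)
  have hlen : ‖s - c‖ ≤ c := by
    rw [Real.norm_eq_abs, abs_le]
    constructor <;> linarith [hs.2]
  have hmono : c ^ β ≤ s ^ β := Real.rpow_le_rpow_of_nonpos hs0 hs.2 hβ
  calc ‖f s‖ ≤ ‖f s - f c‖ + ‖f c‖ := norm_le_norm_sub_add _ _
    _ ≤ C * s ^ β * c + ‖f c‖ / c ^ β * c ^ β := by
        rw [div_mul_cancel₀ _ hcβ.ne']
        gcongr
        exact hmvt.trans (by gcongr)
    _ ≤ C * s ^ β * c + ‖f c‖ / c ^ β * s ^ β := by gcongr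
    _ = (C * c + ‖f c‖ / c ^ β) * ‖s ^ β‖ := by
        rw [Real.norm_of_nonneg (Real.rpow_nonneg hs0.le β)]
        ring

theorem sqIntegrableAtZero_rpow_smul_iff {α β : ℝ} {v : E} (hv : v ≠ 0) :
    SqIntegrableAtZero α (fun s => s ^ β • v) ↔ -1 < α + 2 * β := by
  have hpow : ∀ b, EqOn (fun s : ℝ => s ^ α * ‖s ^ β • v‖ ^ 2)
      (fun s => ‖v‖ ^ 2 * s ^ (α + 2 * β)) (Ioc 0 b) := by
    intro b s hs
    have hs0 : 0 < s := hs.1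
    simp only [norm_smul, Real.norm_of_nonneg (Real.rpow_nonneg hs0.le β), Real.rpow_add hs0,
      mul_comm 2 β, Real.rpow_mul hs0.le, Real.rpow_two]
    ring
  have hv2 : IsUnit (‖v‖ ^ 2) := (pow_ne_zero 2 (norm_ne_zero_iff.2 hv)).isUnit
  rw [SqIntegrableAtZero, ← integrableAtFilter_rpow_nhdsGT_zero_iff,
    integrableAtFilter_nhdsGT_iff, integrableAtFilter_nhdsGT_iff]
  refine exists_congr fun b => and_congr_right fun _ => ?_
  rw [integrableOn_congr_fun (hpow b) measurableSet_Ioc]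
  exact integrable_const_mul_iff hv2 _

theorem eq_zero_of_sqIntegrableAtZero_of_sub_isBigO {α : ℝ} (hα : 3 ≤ α) {φ : ℝ → E} {v : E}
    (hφ : SqIntegrableAtZero α φ)
    (hsub : (fun s => φ s - s ^ (1 - α) • v) =O[𝓝[>] 0] fun s : ℝ => s ^ ((1 - α) / 2)) :
    v = 0 := by
  by_contra hv
  have herr : SqIntegrableAtZero α fun s : ℝ => s ^ ((1 - α) / 2) • (1 : ℝ) :=
    (sqIntegrableAtZero_rpow_smul_iff one_ne_zero).2 (by linarith)
  simp only [smul_eq_mul, mul_one] at herr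
  have hmeas : StronglyMeasurable fun s : ℝ => s ^ (1 - α) • v :=
    (measurable_id.pow_const (1 - α)).stronglyMeasurable.smul_const v
  have hlead : SqIntegrableAtZero α fun s : ℝ => s ^ (1 - α) • v :=
    hφ.of_sub_isBigO hmeas.stronglyMeasurableAtFilter herr hsub
  linarith [(sqIntegrableAtZero_rpow_smul_iff hv).1 hlead]

/-- The data `φ`, `p = s ^ α φ'` (the quasi-derivative) and `g = p'` of an element of the maximal
domain of the Sturm–Liouville operator `φ ↦ -s ^ (-α) (s ^ α φ')'` in `L²(s ^ α ds)`. Only the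
conditions at the endpoint `0⁺` are recorded. The last one says that `s ^ (-α) g` lies in
`L²(s ^ α ds)` near `0⁺`. -/
structure MemMaximalDomainAtZero (α : ℝ) (φ p g : ℝ → E) : Prop where
  hasDerivAt : ∀ᶠ s in 𝓝[>] 0, HasDerivAt φ (s ^ (-α) • p s) s
  hasDerivAt_quasiDeriv : ∀ᶠ s in 𝓝[>] 0, HasDerivAt p (g s) s
  sqIntegrable : SqIntegrableAtZero α φ
  sqIntegrable_deriv_quasiDeriv : SqIntegrableAtZero (-α) g

namespace MemMaximalDomainAtZero

variable {α : ℝ} {φ p g : ℝ → E}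

theorem exists_quasiDeriv_sub_isBigO [CompleteSpace E] (h : MemMaximalDomainAtZero α φ p g)
    (hα : -1 < α) :
    ∃ p₀ : E, (fun s => p s - p₀) =O[𝓝[>] 0] fun s : ℝ => s ^ ((α + 1) / 2) := by
  obtain ⟨c, hc, hpc⟩ := mem_nhdsGT_iff_exists_Ioc_subset.1 h.hasDerivAt_quasiDeriv
  have hgm : StronglyMeasurableAtFilter g (𝓝[>] 0) := by
    refine ⟨Ioc 0 c, Ioc_mem_nhdsGT hc, (aestronglyMeasurable_deriv p _).congr ?_⟩
    filter_upwards [ae_restrict_mem measurableSet_Ioc] with s hs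
    exact (hpc hs).deriv
  obtain ⟨p₀, hp₀⟩ := exists_eventually_eq_add_integral h.hasDerivAt_quasiDeriv
    (h.sqIntegrable_deriv_quasiDeriv.integrableAtFilter hα hgm)
  refine ⟨p₀, (h.sqIntegrable_deriv_quasiDeriv.isBigO_integral hα).congr' ?_ EventuallyEq.rfl⟩
  filter_upwards [hp₀] with s hs
  rw [hs, add_sub_cancel_left]

theorem sub_rpow_smul_isBigO (h : MemMaximalDomainAtZero α φ p g) (hα : 1 ≤ α) {v : E}
    (hp : (fun s => p s - (1 - α) • v) =O[𝓝[>] 0] fun s : ℝ => s ^ ((α + 1) / 2)) :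
    (fun s => φ s - s ^ (1 - α) • v) =O[𝓝[>] 0] fun s : ℝ => s ^ ((1 - α) / 2) := by
  refine isBigO_rpow_of_hasDerivAt (f' := fun s => s ^ (-α) • (p s - (1 - α) • v))
    (by linarith) ?_ ?_
  · filter_upwards [h.hasDerivAt, self_mem_nhdsWithin] with s hs hs0
    have hpow := (Real.hasDerivAt_rpow_const (p := 1 - α) (Or.inl (ne_of_gt hs0))).smul_const v
    refine (hs.sub hpow).congr_deriv ?_
    rw [smul_sub, smul_smul, mul_comm, sub_sub_cancel_left]
  · refine ((isBigO_refl (fun s : ℝ => s ^ (-α)) _).smul hp).congr' EventuallyEq.rfl ?_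
    filter_upwards [self_mem_nhdsWithin] with s hs
    rw [smul_eq_mul, ← Real.rpow_add hs]
    ring_nf

theorem isBigO [CompleteSpace E] (h : MemMaximalDomainAtZero α φ p g) (hα : 3 ≤ α) :
    p =O[𝓝[>] 0] (fun s : ℝ => s ^ ((α + 1) / 2)) ∧
      φ =O[𝓝[>] 0] fun s : ℝ => s ^ ((1 - α) / 2) := by
  obtain ⟨p₀, hp₀⟩ := h.exists_quasiDeriv_sub_isBigO (by linarith)
  obtain ⟨v, rfl⟩ : ∃ v, (1 - α) • v = p₀ :=
    ⟨(1 - α)⁻¹ • p₀, smul_inv_smul₀ (by linarith) p₀⟩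
  have hφ := h.sub_rpow_smul_isBigO (by linarith) hp₀
  obtain rfl : v = 0 := eq_zero_of_sqIntegrableAtZero_of_sub_isBigO hα h.sqIntegrable hφ
  simpa only [smul_zero, sub_zero] using And.intro hp₀ hφ

end MemMaximalDomainAtZero

end

theorem MemDomT.memMaximalDomainAtZero {φ φ₁ g : ℝ → ℂ} (h : MemDomT φ φ₁ g) :
    MemMaximalDomainAtZero 3 φ (fun s : ℝ => (s : ℂ) ^ 3 * φ₁ s) g := by
  obtain ⟨hφ, -, hp, -, hφint, hgint⟩ := h
  have hmem : Ioo (0 : ℝ) 1 ∈ 𝓝[>] 0 := Ioo_mem_nhdsGT one_pos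
  have hnhds : ∀ s ∈ Ioo (0 : ℝ) 1, Ioc (0 : ℝ) 1 ∈ 𝓝 s := fun s hs => Ioc_mem_nhds hs.1 hs.2
  constructor
  · filter_upwards [hmem] with s hs
    refine ((hφ s (Ioo_subset_Ioc_self hs)).hasDerivAt (hnhds s hs)).congr_deriv ?_
    have : (s : ℂ) ≠ 0 := by exact_mod_cast hs.1.ne'
    rw [Real.rpow_neg hs.1.le, Real.rpow_ofNat, Complex.real_smul]
    push_cast
    field_simp
  · filter_upwards [hmem] with s hs
    exact (hp s (Ioo_subset_Ioc_self hs)).hasDerivAt (hnhds s hs)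
  · refine integrableAtFilter_nhdsGT_iff.2 ⟨1, one_pos, ?_⟩
    simpa only [Real.rpow_ofNat] using hφint
  · refine integrableAtFilter_nhdsGT_iff.2 ⟨1, one_pos, hgint.congr_fun (fun s hs => ?_)
      measurableSet_Ioc⟩
    simp only [Real.rpow_neg hs.1.le, Real.rpow_ofNat]

section

variable {𝕜 H : Type*} [RCLike 𝕜] [NormedAddCommGroup H] [InnerProductSpace 𝕜 H]

theorem isBigO_inner {ι : Type*} {l : Filter ι} {x y : ι → H} {u w : ι → ℝ}
    (hx : x =O[l] u) (hy : y =O[l] w) :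
    (fun i => inner 𝕜 (x i) (y i)) =O[l] fun i => u i * w i := by
  refine IsBigO.trans (IsBigO.of_norm_le fun i => ?_) (hx.norm_left.mul hy.norm_left)
  exact norm_inner_le_norm (x i) (y i)

theorem lagrange_bracket_vanishes_at_zero_general [NormedSpace ℝ H] [CompleteSpace H]
    {α : ℝ} (hα : 3 ≤ α) {φ p gφ χ q gχ : ℝ → H}
    (hφ : MemMaximalDomainAtZero α φ p gφ) (hχ : MemMaximalDomainAtZero α χ q gχ) :
    Tendsto (fun s => inner 𝕜 (χ s) (p s) - inner 𝕜 (q s) (φ s)) (𝓝[>] 0) (𝓝 0) := by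
  obtain ⟨hp, hφ⟩ := hφ.isBigO hα
  obtain ⟨hq, hχ⟩ := hχ.isBigO hα
  have hpow : (fun s : ℝ => s ^ ((1 - α) / 2) * s ^ ((α + 1) / 2)) =ᶠ[𝓝[>] 0] id := by
    filter_upwards [self_mem_nhdsWithin] with s hs
    have hexp : (1 - α) / 2 + (α + 1) / 2 = 1 := by ring
    rw [← Real.rpow_add hs, hexp, Real.rpow_one, id]
  have hbracket := (isBigO_inner (𝕜 := 𝕜) hχ hp).sub
    ((isBigO_inner (𝕜 := 𝕜) hq hφ).congr_right fun s => mul_comm _ _)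
  exact (hbracket.trans_eventuallyEq hpow).trans_tendsto
    (tendsto_id.mono_left nhdsWithin_le_nhds)

end

/-- For two functions `φ, χ` in the domain of the singular Sturm–Liouville
operator, the Lagrange bracket `s³ φ'(s) conj(χ(s)) - φ(s) s³ conj(χ'(s))` tends to `0`
as `s → 0⁺`. -/
theorem lagrange_bracket_vanishes_at_zero
    (φ φ₁ gφ : ℝ → ℂ) (hφ : MemDomT φ φ₁ gφ)
    (χ χ₁ gχ : ℝ → ℂ) (hχ : MemDomT χ χ₁ gχ) :
    Tendsto
      (fun s : ℝ => (s:ℂ) ^ 3 * φ₁ s * (starRingEnd ℂ) (χ s)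
        - φ s * (s:ℂ) ^ 3 * (starRingEnd ℂ) (χ₁ s))
      (nhdsWithin 0 (Ioc 0 1)) (nhds 0) := by
  simpa [nhdsWithin_Ioc_eq_nhdsGT, mul_assoc] using lagrange_bracket_vanishes_at_zero_general
    (𝕜 := ℂ) le_rfl hφ.memMaximalDomainAtZero hχ.memMaximalDomainAtZero
end

section
/- Let φ : (0, 1] → ℂ be continuously differentiable, assume that the map s ↦ s³φ′(s) is continuously differentiable on (0, 1], and assume the two integrability conditions ∫₀¹ s³|φ(s)|² ds < ∞ and ∫₀¹ s⁻³ |(d/ds)(s³φ′(s))|² ds < ∞. Then ∫₀¹ s³|φ′(s)|² ds < ∞ and the integration-by-parts identity ∫₀¹ ( −(d/ds)(s³φ′(s)) )·conj(φ(s)) ds = ∫₀¹ s³|φ′(s)|² ds − φ′(1)·conj(φ(1)) holds; in particular no boundary contribution arises at the singular endpoint s = 0. -/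
open Set MeasureTheory Filter

/-!
The identity holds for every Sturm–Liouville operator `φ ↦ -r⁻¹(pφ')'` on `(a, b]` that has an
integrable weight and is in the limit-point case at `a`; here `p = r = s³`, and `u = -s⁻²/2` is a
solution of `pu' = 1` outside `L²(r)`.

Write `w = pφ'` for the flux and `R(s) = ∫ₐˢ r`. By Cauchy–Schwarz, `w` has a limit `c` at `a`, with
`‖w - c‖² ≤ K R`. If `c ≠ 0`, then `φ` grows at least as fast as `u`, contradicting `φ ∈ L²(r)`.
Hence `c = 0`, and the boundary term `F = ⟪φ, w⟫` satisfies `‖F‖² ≤ K R ‖φ‖²`. Since `r ‖φ‖²` is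
integrable while `r / R = (log R)'` is not, `F` comes arbitrarily close to `0` along some sequence
tending to `a`. As `F' = ⟪φ, w'⟫ + p ‖φ'‖²` with an integrable first term and a nonnegative second
one, such a sequence suffices both for the integrability of `p ‖φ'‖²` and for the value of its
integral.
-/

open scoped Topology

section WeightedCauchySchwarz

variable {α E F : Type*} [MeasurableSpace α] {μ : Measure α} {r : α → ℝ}
  [NormedAddCommGroup E] [NormedAddCommGroup F] {φ : α → E} {g : α → F}

theorem integrable_norm_mul_norm_of_weight (hr : ∀ᵐ x ∂μ, 0 < r x)
    (hφ : AEStronglyMeasurable φ μ) (hg : AEStronglyMeasurable g μ)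
    (hrφ : Integrable (fun x ↦ r x * ‖φ x‖ ^ 2) μ)
    (hrg : Integrable (fun x ↦ (r x)⁻¹ * ‖g x‖ ^ 2) μ) :
    Integrable (fun x ↦ ‖φ x‖ * ‖g x‖) μ := by
  refine (hrφ.add hrg).mono' (hφ.norm.mul hg.norm) ?_
  filter_upwards [hr] with x hx
  have square_nonneg : 0 ≤ (r x)⁻¹ * (r x * ‖φ x‖ - ‖g x‖) ^ 2 := by positivity
  have square_expand : (r x)⁻¹ * (r x * ‖φ x‖ - ‖g x‖) ^ 2 =
      r x * ‖φ x‖ ^ 2 + (r x)⁻¹ * ‖g x‖ ^ 2 - 2 * (‖φ x‖ * ‖g x‖) := by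
    field_simp
    ring
  have product_nonneg : 0 ≤ ‖φ x‖ * ‖g x‖ := by positivity
  rw [Real.norm_of_nonneg product_nonneg, Pi.add_apply]
  linarith

theorem integrable_inner_of_weight {𝕜 : Type*} [RCLike 𝕜] [InnerProductSpace 𝕜 E]
    {g : α → E} (hr : ∀ᵐ x ∂μ, 0 < r x)
    (hφ : AEStronglyMeasurable φ μ) (hg : AEStronglyMeasurable g μ)
    (hrφ : Integrable (fun x ↦ r x * ‖φ x‖ ^ 2) μ)
    (hrg : Integrable (fun x ↦ (r x)⁻¹ * ‖g x‖ ^ 2) μ) :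
    Integrable (fun x ↦ inner 𝕜 (φ x) (g x)) μ :=
  (integrable_norm_mul_norm_of_weight hr hφ hg hrφ hrg).mono' (hφ.inner hg)
    (ae_of_all _ fun _ ↦ norm_inner_le_norm _ _)

theorem integrable_of_weight (hr : ∀ᵐ x ∂μ, 0 < r x) (hrint : Integrable r μ)
    (hg : AEStronglyMeasurable g μ) (hrg : Integrable (fun x ↦ (r x)⁻¹ * ‖g x‖ ^ 2) μ) :
    Integrable g μ := by
  rw [← integrable_norm_iff hg]
  simpa using integrable_norm_mul_norm_of_weight (φ := fun _ ↦ (1 : ℝ)) hr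
    aestronglyMeasurable_const hg (by simpa using hrint) hrg

theorem sq_integral_norm_le_of_weight (hr : ∀ᵐ x ∂μ, 0 < r x) (hrint : Integrable r μ)
    (hg : AEStronglyMeasurable g μ) (hrg : Integrable (fun x ↦ (r x)⁻¹ * ‖g x‖ ^ 2) μ) :
    (∫ x, ‖g x‖ ∂μ) ^ 2 ≤ (∫ x, (r x)⁻¹ * ‖g x‖ ^ 2 ∂μ) * ∫ x, r x ∂μ := by
  have hgint := (integrable_of_weight hr hrint hg hrg).norm
  have quadratic_nonneg (l : ℝ) : 0 ≤ (∫ x, r x ∂μ) * (l * l) + (-2 * ∫ x, ‖g x‖ ∂μ) * l +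
      ∫ x, (r x)⁻¹ * ‖g x‖ ^ 2 ∂μ := by
    have hlin : Integrable (fun x ↦ r x * (l * l) + -2 * ‖g x‖ * l) μ :=
      (hrint.mul_const _).add ((hgint.const_mul _).mul_const _)
    rw [← integral_mul_const, ← integral_const_mul, ← integral_mul_const,
      ← integral_add (hrint.mul_const _) ((hgint.const_mul _).mul_const _),
      ← integral_add hlin hrg]
    refine integral_nonneg_of_ae ?_
    filter_upwards [hr] with x hx
    have square_expand : r x * (l * l) + -2 * ‖g x‖ * l + (r x)⁻¹ * ‖g x‖ ^ 2 =
        r x * (l - (r x)⁻¹ * ‖g x‖) ^ 2 := by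
      field_simp
      ring
    simp only [Pi.zero_apply, square_expand]
    positivity
  have := discrim_le_zero quadratic_nonneg
  rw [discrim] at this
  linarith

end WeightedCauchySchwarz

section Primitive

variable {r : ℝ → ℝ} {a b : ℝ}

theorem tendsto_integral_nhdsGT_zero (hab : a < b) (hr : IntegrableOn r (Ioc a b)) :
    Tendsto (fun s ↦ ∫ t in a..s, r t) (𝓝[>] a) (𝓝 0) := by
  have hcont : ContinuousOn (fun s ↦ ∫ t in a..s, r t) (Icc a b) := by
    rw [← uIcc_of_le hab.le]
    exact intervalIntegral.continuousOn_primitive_interval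
      (by rwa [uIcc_of_le hab.le, integrableOn_Icc_iff_integrableOn_Ioc])
  simpa using ((hcont a (left_mem_Icc.2 hab.le)).mono Ioc_subset_Icc_self).tendsto.mono_left
    (nhdsWithin_Ioc_eq_nhdsGT hab).ge

theorem hasDerivAt_integral_of_continuousOn_Ioc (hr : IntegrableOn r (Ioc a b))
    (hrc : ContinuousOn r (Ioc a b)) {s : ℝ} (hs : s ∈ Ioo a b) :
    HasDerivAt (fun s ↦ ∫ t in a..s, r t) (r s) s := by
  have hnhds := Ioc_mem_nhds hs.1 hs.2
  refine intervalIntegral.integral_hasDerivAt_right ?_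
    ((hrc.stronglyMeasurableAtFilter_nhdsWithin measurableSet_Ioc s).filter_mono
      (nhdsWithin_eq_nhds.2 hnhds).ge) (hrc.continuousAt hnhds)
  rw [intervalIntegrable_iff_integrableOn_Ioc_of_le hs.1.le]
  exact hr.mono_set (Ioc_subset_Ioc_right hs.2.le)

theorem integral_pos_of_pos_on_Ioc (hr : IntegrableOn r (Ioc a b)) (hr0 : ∀ s ∈ Ioc a b, 0 < r s)
    {s : ℝ} (hs : s ∈ Ioc a b) : 0 < ∫ t in a..s, r t := by
  refine intervalIntegral.intervalIntegral_pos_of_pos_on ?_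
    (fun t ht ↦ hr0 t ⟨ht.1, ht.2.le.trans hs.2⟩) hs.1
  rw [intervalIntegrable_iff_integrableOn_Ioc_of_le hs.1.le]
  exact hr.mono_set (Ioc_subset_Ioc_right hs.2)

-- Otherwise `(log R)' = r / R` would be dominated by `r f`, although `log R → -∞`.
theorem frequently_mul_lt_of_integrable_deriv_mul {R f : ℝ → ℝ} {k : Set ℝ} {l : Filter ℝ}
    [NeBot l] [TendstoIxxClass Icc l l] (hk : k ∈ l) (hR : ∀ᶠ s in l, HasDerivAt R (r s) s)
    (hR0 : ∀ᶠ s in l, 0 < R s) (hlim : Tendsto R l (𝓝 0))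
    (hrf : IntegrableOn (fun s ↦ r s * f s) k) {ε : ℝ} (hε : 0 < ε) :
    ∃ᶠ s in l, R s * f s < ε := by
  by_contra hfreq
  have hlog : ∀ᶠ s in l, HasDerivAt (fun t ↦ Real.log (R t)) (r s / R s) s := by
    filter_upwards [hR, hR0] with s hs hs0 using hs.log hs0.ne'
  have hdom : deriv (fun t ↦ Real.log (R t)) =O[l] fun s ↦ r s * f s := by
    refine Asymptotics.IsBigO.of_bound ε⁻¹ ?_
    filter_upwards [hlog, hR0, not_frequently.1 hfreq] with s hs hs0 hle
    have hf : (R s)⁻¹ ≤ ε⁻¹ * |f s| := by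
      rw [inv_le_iff_one_le_mul₀ hs0, mul_assoc, le_inv_mul_iff₀ hε]
      nlinarith [le_abs_self (f s)]
    rw [hs.deriv, norm_div, norm_mul, Real.norm_of_nonneg hs0.le, div_eq_mul_inv,
      Real.norm_eq_abs (f s), mul_left_comm]
    gcongr
  exact not_integrableOn_of_tendsto_norm_atTop_of_deriv_isBigO_filter l hk
    (hlog.mono fun s hs ↦ hs.differentiableAt)
    (tendsto_abs_atBot_atTop.comp (Real.tendsto_log_nhdsGT_zero.comp
      (tendsto_nhdsWithin_iff.2 ⟨hlim, hR0⟩))) hdom hrf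

theorem mapClusterPt_zero_of_sq_norm_le {E : Type*} [NormedAddCommGroup E] {F : ℝ → E}
    {f : ℝ → ℝ} {K : ℝ} (hab : a < b) (hrc : ContinuousOn r (Ioc a b))
    (hr0 : ∀ s ∈ Ioc a b, 0 < r s) (hr : IntegrableOn r (Ioc a b))
    (hrf : IntegrableOn (fun s ↦ r s * f s) (Ioc a b))
    (hF : ∀ s ∈ Ioc a b, ‖F s‖ ^ 2 ≤ K * (∫ t in a..s, r t) * f s) :
    MapClusterPt 0 (𝓝[>] a) F := by
  rw [Metric.nhds_basis_ball.mapClusterPt_iff_frequently]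
  intro ε hε
  have hfreq := frequently_mul_lt_of_integrable_deriv_mul (f := fun s ↦ K * f s) (l := 𝓝[>] a)
    (Ioc_mem_nhdsGT hab)
    (by filter_upwards [Ioo_mem_nhdsGT hab] with s
          using hasDerivAt_integral_of_continuousOn_Ioc hr hrc)
    (by filter_upwards [Ioc_mem_nhdsGT hab] with s using integral_pos_of_pos_on_Ioc hr hr0)
    (tendsto_integral_nhdsGT_zero hab hr)
    (by simpa only [IntegrableOn, mul_left_comm] using hrf.const_mul K) (sq_pos_of_pos hε)
  refine (hfreq.and_eventually (Ioc_mem_nhdsGT hab)).mono fun s ⟨hlt, hs⟩ ↦ ?_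
  rw [mem_ball_zero_iff]
  refine lt_of_pow_lt_pow_left₀ 2 hε.le ((hF s hs).trans_lt ?_)
  linarith [hlt]

end Primitive

section FundamentalTheorem

variable {E : Type*} [NormedAddCommGroup E] [NormedSpace ℝ E] [CompleteSpace E]
  {F f : ℝ → E} {a b : ℝ}

theorem intervalIntegrable_of_continuousOn_Ioc {E : Type*} [NormedAddCommGroup E] {f : ℝ → E}
    (hf : ContinuousOn f (Ioc a b)) {s : ℝ} (hs : s ∈ Ioc a b) :
    IntervalIntegrable f volume s b :=
  (hf.mono fun _ ht ↦ ⟨hs.1.trans_le ht.1, ht.2⟩).intervalIntegrable_of_Icc hs.2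

theorem integral_eq_sub_of_hasDerivWithinAt_Ioc
    (hF : ∀ s ∈ Ioc a b, HasDerivWithinAt F (f s) (Ioc a b) s) (hf : ContinuousOn f (Ioc a b))
    {s : ℝ} (hs : s ∈ Ioc a b) : ∫ t in s..b, f t = F b - F s := by
  have hsub : Icc s b ⊆ Ioc a b := fun t ht ↦ ⟨hs.1.trans_le ht.1, ht.2⟩
  exact intervalIntegral.integral_eq_sub_of_hasDerivAt_of_le hs.2
    (fun t ht ↦ (hF t (hsub ht)).continuousWithinAt.mono hsub)
    (fun t ht ↦ (hF t (hsub (Ioo_subset_Icc_self ht))).hasDerivAt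
      (Ioc_mem_nhds (hs.1.trans ht.1) ht.2))
    (intervalIntegrable_of_continuousOn_Ioc hf hs)

theorem integral_Ioc_eq_sub_of_mapClusterPt {z : E} (hab : a < b)
    (hF : ∀ s ∈ Ioc a b, HasDerivWithinAt F (f s) (Ioc a b) s) (hf : ContinuousOn f (Ioc a b))
    (hfint : IntegrableOn f (Ioc a b)) (hz : MapClusterPt z (𝓝[>] a) F) :
    ∫ t in Ioc a b, f t = F b - z := by
  have hprim : Tendsto (fun s ↦ ∫ t in s..b, f t) (𝓝[>] a) (𝓝 (∫ t in a..b, f t)) := by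
    have hcont : ContinuousOn (fun s ↦ ∫ t in s..b, f t) (Icc a b) := by
      rw [← uIcc_of_le hab.le]
      exact intervalIntegral.continuousOn_primitive_interval_left
        (by rwa [uIcc_of_le hab.le, integrableOn_Icc_iff_integrableOn_Ioc])
    exact ((hcont a (left_mem_Icc.2 hab.le)).mono Ioc_subset_Icc_self).tendsto.mono_left
      (nhdsWithin_Ioc_eq_nhdsGT hab).ge
  have hlim : Tendsto F (𝓝[>] a) (𝓝 (F b - ∫ t in a..b, f t)) := by
    refine (tendsto_const_nhds.sub hprim).congr' ?_
    filter_upwards [Ioc_mem_nhdsGT hab] with s hs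
    rw [integral_eq_sub_of_hasDerivWithinAt_Ioc hF hf hs, sub_sub_cancel]
  have hz_eq : z = F b - ∫ t in a..b, f t := eq_of_nhds_neBot (hz.clusterPt.mono hlim)
  rw [← intervalIntegral.integral_of_le hab.le, hz_eq, sub_sub_cancel]

theorem integrableOn_Ioc_of_frequently_norm_le {𝕜 : Type*} [RCLike 𝕜] {F h : ℝ → 𝕜} {f : ℝ → ℝ}
    {C : ℝ} (hab : a < b) (hF : ∀ s ∈ Ioc a b, HasDerivWithinAt F (h s + (f s : 𝕜)) (Ioc a b) s)
    (hh : ContinuousOn h (Ioc a b)) (hf : ContinuousOn f (Ioc a b))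
    (hf0 : ∀ s ∈ Ioc a b, 0 ≤ f s) (hhint : IntegrableOn h (Ioc a b))
    (hC : ∃ᶠ s in 𝓝[>] a, ‖F s‖ ≤ C) : IntegrableOn f (Ioc a b) := by
  have hfC : ContinuousOn (fun s ↦ (f s : 𝕜)) (Ioc a b) :=
    RCLike.continuous_ofReal.comp_continuousOn hf
  obtain ⟨x, hxa, hx⟩ := exists_seq_forall_of_frequently
    (hC.and_eventually (Ioc_mem_nhdsGT hab))
  refine integrableOn_Ioc_of_intervalIntegral_norm_bounded_left (a := x)
    (I := ‖F b‖ + C + ∫ t in Ioc a b, ‖h t‖)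
    (fun n ↦ (intervalIntegrable_of_continuousOn_Ioc hf (hx n).2).1)
    (hxa.mono_right nhdsWithin_le_nhds) (.of_forall fun n ↦ ?_)
  obtain ⟨hFn, hn⟩ := hx n
  have hsub : Ioc (x n) b ⊆ Ioc a b := Ioc_subset_Ioc_left hn.1.le
  have hftc : (∫ t in Ioc (x n) b, (f t : 𝕜)) = F b - F (x n) - ∫ t in Ioc (x n) b, h t := by
    rw [← integral_eq_sub_of_hasDerivWithinAt_Ioc hF (hh.add hfC) hn,
      intervalIntegral.integral_of_le hn.2,
      integral_add (hhint.mono_set hsub) (intervalIntegrable_of_continuousOn_Ioc hfC hn).1,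
      add_sub_cancel_left]
  calc ∫ t in Ioc (x n) b, ‖f t‖
      = ∫ t in Ioc (x n) b, f t :=
        setIntegral_congr_fun measurableSet_Ioc fun t ht ↦ Real.norm_of_nonneg (hf0 t (hsub ht))
    _ ≤ ‖∫ t in Ioc (x n) b, (f t : 𝕜)‖ := by
        rw [integral_ofReal, RCLike.norm_ofReal]
        exact le_abs_self _
    _ ≤ ‖F b‖ + ‖F (x n)‖ + ∫ t in Ioc (x n) b, ‖h t‖ := by
        rw [hftc]
        exact (norm_sub_le _ _).trans
          (add_le_add (norm_sub_le _ _) (norm_integral_le_integral_norm _))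
    _ ≤ ‖F b‖ + C + ∫ t in Ioc a b, ‖h t‖ := by
        gcongr
        exacts [ae_of_all _ fun _ ↦ norm_nonneg _, hhint.norm]

end FundamentalTheorem

section SturmLiouville

variable {E : Type*} [NormedAddCommGroup E] [NormedSpace ℝ E] {p r : ℝ → ℝ} {a b : ℝ}

/-- Weyl's limit-point case at `a` for the operator `φ ↦ -r⁻¹(pφ')'` on `L²((a, b], r ds)` with `r`
integrable near `a`. The constant solutions of `(pu')' = 0` are then in `L²`, so the condition is
that a nonconstant one, normalized by `pu' = 1`, is not in `L²` near `a`. -/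
def IsLimitPointAtLeft (p r : ℝ → ℝ) (a b : ℝ) : Prop :=
  ∃ u : ℝ → ℝ, (∀ s ∈ Ioc a b, HasDerivWithinAt u (p s)⁻¹ (Ioc a b) s) ∧
    ¬ IntegrableAtFilter (fun s ↦ r s * u s ^ 2) (𝓝[>] a)

/-- The smooth maximal domain of `φ ↦ -r⁻¹(pφ')'` in `L²((a, b], r ds)`. As in `MemDomT`, the
derivatives `φ₁ = φ'` and `g = (pφ')'` are carried along as data. -/
structure MemMaximalDomain (p r : ℝ → ℝ) (a b : ℝ) (φ φ₁ g : ℝ → E) : Prop where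
  hasDerivWithinAt : ∀ s ∈ Ioc a b, HasDerivWithinAt φ (φ₁ s) (Ioc a b) s
  continuousOn_deriv : ContinuousOn φ₁ (Ioc a b)
  hasDerivWithinAt_flux :
    ∀ s ∈ Ioc a b, HasDerivWithinAt (fun t ↦ p t • φ₁ t) (g s) (Ioc a b) s
  continuousOn_deriv_flux : ContinuousOn g (Ioc a b)
  integrableOn_sq : IntegrableOn (fun s ↦ r s * ‖φ s‖ ^ 2) (Ioc a b)
  integrableOn_sq_deriv_flux : IntegrableOn (fun s ↦ (r s)⁻¹ * ‖g s‖ ^ 2) (Ioc a b)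

theorem norm_sub_sub_smul_le_of_norm_flux_sub_le {u : ℝ → ℝ} {φ φ₁ : ℝ → E} {c : E} {s d ε : ℝ}
    (hsd : s ≤ d) (hp : ∀ t ∈ Ico s d, 0 < p t)
    (hu : ∀ t ∈ Icc s d, HasDerivWithinAt u (p t)⁻¹ (Icc s d) t)
    (hφ : ∀ t ∈ Icc s d, HasDerivWithinAt φ (φ₁ t) (Icc s d) t)
    (hflux : ∀ t ∈ Ico s d, ‖p t • φ₁ t - c‖ ≤ ε) :
    ‖φ d - φ s - (u d - u s) • c‖ ≤ ε * (u d - u s) := by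
  have hdiff {t : ℝ} (ht : t ∈ Icc s d) : HasDerivWithinAt
      (fun t ↦ φ t - φ s - (u t - u s) • c) (φ₁ t - (p t)⁻¹ • c) (Icc s d) t :=
    ((hφ t ht).sub_const _).sub (((hu t ht).sub_const _).smul_const c)
  have hbound {t : ℝ} (ht : t ∈ Icc s d) :
      HasDerivWithinAt (fun t ↦ ε * (u t - u s)) (ε * (p t)⁻¹) (Icc s d) t :=
    ((hu t ht).sub_const _).const_mul ε
  refine image_norm_le_of_norm_deriv_right_le_deriv_boundary'
    (fun t ht ↦ (hdiff ht).continuousWithinAt)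
    (fun t ht ↦ (hdiff (Ico_subset_Icc_self ht)).mono_of_mem_nhdsWithin (Icc_mem_nhdsGE_of_mem ht))
    (by simp) (fun t ht ↦ (hbound ht).continuousWithinAt)
    (fun t ht ↦ (hbound (Ico_subset_Icc_self ht)).mono_of_mem_nhdsWithin (Icc_mem_nhdsGE_of_mem ht))
    (fun t ht ↦ ?_) (right_mem_Icc.2 hsd)
  have hfactor : φ₁ t - (p t)⁻¹ • c = (p t)⁻¹ • (p t • φ₁ t - c) := by
    rw [smul_sub, inv_smul_smul₀ (hp t ht).ne']
  rw [hfactor, norm_smul, norm_inv, Real.norm_of_nonneg (hp t ht).le, mul_comm]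
  exact mul_le_mul_of_nonneg_right (hflux t ht) (inv_nonneg.2 (hp t ht).le)

theorem exists_abs_le_add_mul_norm_of_tendsto_flux {u : ℝ → ℝ} {φ φ₁ : ℝ → E} {c : E} (hab : a < b)
    (hp : ∀ s ∈ Ioc a b, 0 < p s)
    (hu : ∀ s ∈ Ioc a b, HasDerivWithinAt u (p s)⁻¹ (Ioc a b) s)
    (hφ : ∀ s ∈ Ioc a b, HasDerivWithinAt φ (φ₁ s) (Ioc a b) s)
    (hlim : Tendsto (fun s ↦ p s • φ₁ s) (𝓝[>] a) (𝓝 c)) (hc : c ≠ 0) :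
    ∃ A B : ℝ, ∀ᶠ s in 𝓝[>] a, |u s| ≤ A + B * ‖φ s‖ := by
  have hc0 : 0 < ‖c‖ := norm_pos_iff.2 hc
  have hnear : ∀ᶠ s in 𝓝[>] a, ‖p s • φ₁ s - c‖ ≤ ‖c‖ / 2 := by
    simpa [dist_eq_norm] using hlim.eventually (Metric.closedBall_mem_nhds c (half_pos hc0))
  obtain ⟨d, hd, hclose⟩ := (mem_nhdsGT_iff_exists_mem_Ioc_Ioo_subset hab).1 hnear
  refine ⟨|u d| + 2 / ‖c‖ * ‖φ d‖, 2 / ‖c‖, ?_⟩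
  filter_upwards [Ioo_mem_nhdsGT hd.1] with s hs
  have hsub : Icc s d ⊆ Ioc a b := fun t ht ↦ ⟨hs.1.trans_le ht.1, ht.2.trans hd.2⟩
  have hmean : ‖φ d - φ s - (u d - u s) • c‖ ≤ ‖c‖ / 2 * (u d - u s) :=
    norm_sub_sub_smul_le_of_norm_flux_sub_le hs.2.le
      (fun t ht ↦ hp t (hsub (Ico_subset_Icc_self ht))) (fun t ht ↦ (hu t (hsub ht)).mono hsub)
      (fun t ht ↦ (hφ t (hsub ht)).mono hsub) (fun t ht ↦ hclose ⟨hs.1.trans_le ht.1, ht.2⟩)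
  have hincr : |u d - u s| * ‖c‖ ≤ ‖φ d‖ + ‖φ s‖ + ‖c‖ / 2 * |u d - u s| := by
    calc |u d - u s| * ‖c‖ = ‖φ d - φ s - (φ d - φ s - (u d - u s) • c)‖ := by
          rw [sub_sub_cancel, norm_smul, Real.norm_eq_abs]
      _ ≤ ‖φ d‖ + ‖φ s‖ + ‖c‖ / 2 * (u d - u s) :=
        (norm_sub_le _ _).trans (add_le_add (norm_sub_le _ _) hmean)
      _ ≤ ‖φ d‖ + ‖φ s‖ + ‖c‖ / 2 * |u d - u s| := by
        gcongr
        exact le_abs_self _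
  calc |u s| ≤ |u d| + |u d - u s| := by
        simpa [abs_sub_comm] using abs_add_le (u d) (u s - u d)
    _ ≤ |u d| + 2 / ‖c‖ * (‖φ d‖ + ‖φ s‖) := by
        gcongr
        rw [div_mul_eq_mul_div, le_div_iff₀ hc0]
        linarith
    _ = |u d| + 2 / ‖c‖ * ‖φ d‖ + 2 / ‖c‖ * ‖φ s‖ := by ring

theorem IsLimitPointAtLeft.eq_zero_of_tendsto_flux {φ φ₁ : ℝ → E} {c : E}
    (hlp : IsLimitPointAtLeft p r a b) (hab : a < b) (hp : ∀ s ∈ Ioc a b, 0 < p s)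
    (hr0 : ∀ s ∈ Ioc a b, 0 < r s) (hrc : ContinuousOn r (Ioc a b)) (hr : IntegrableOn r (Ioc a b))
    (hφ : ∀ s ∈ Ioc a b, HasDerivWithinAt φ (φ₁ s) (Ioc a b) s)
    (hrφ : IntegrableOn (fun s ↦ r s * ‖φ s‖ ^ 2) (Ioc a b))
    (hlim : Tendsto (fun s ↦ p s • φ₁ s) (𝓝[>] a) (𝓝 c)) : c = 0 := by
  by_contra hc
  obtain ⟨u, hu, hu_int⟩ := hlp
  obtain ⟨A, B, hbound⟩ := exists_abs_le_add_mul_norm_of_tendsto_flux hab hp hu hφ hlim hc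
  have hIoc : Ioc a b ∈ 𝓝[>] a := Ioc_mem_nhdsGT hab
  have hdom : (fun s ↦ r s * u s ^ 2) =O[𝓝[>] a]
      fun s ↦ 2 * A ^ 2 * r s + 2 * B ^ 2 * (r s * ‖φ s‖ ^ 2) := by
    refine Asymptotics.IsBigO.of_bound 1 ?_
    filter_upwards [hbound, hIoc] with s hs hsab
    have hrs := hr0 s hsab
    have hsq : u s ^ 2 ≤ 2 * A ^ 2 + 2 * (B * ‖φ s‖) ^ 2 :=
      (sq_abs (u s)).symm.trans_le ((pow_le_pow_left₀ (abs_nonneg _) hs 2).trans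
        (by linarith [sq_nonneg (A - B * ‖φ s‖)]))
    rw [one_mul, Real.norm_of_nonneg (by positivity), Real.norm_of_nonneg (by positivity)]
    linarith [mul_le_mul_of_nonneg_left hsq hrs.le]
  have hmeas : StronglyMeasurableAtFilter (fun s ↦ r s * u s ^ 2) (𝓝[>] a) :=
    ⟨Ioc a b, hIoc, (hrc.mul (.pow (fun s hs ↦ (hu s hs).continuousWithinAt)
      2)).aestronglyMeasurable measurableSet_Ioc⟩
  exact hu_int (hdom.integrableAtFilter hmeas
    ⟨Ioc a b, hIoc, (hr.const_mul _).add (hrφ.const_mul _)⟩)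

theorem exists_sq_norm_sub_le_mul_integral [CompleteSpace E] {w g : ℝ → E}
    (hr0 : ∀ s ∈ Ioc a b, 0 < r s) (hr : IntegrableOn r (Ioc a b))
    (hw : ∀ s ∈ Ioc a b, HasDerivWithinAt w (g s) (Ioc a b) s) (hg : ContinuousOn g (Ioc a b))
    (hrg : IntegrableOn (fun s ↦ (r s)⁻¹ * ‖g s‖ ^ 2) (Ioc a b)) :
    ∃ (c : E) (K : ℝ), ∀ s ∈ Ioc a b, ‖w s - c‖ ^ 2 ≤ K * ∫ t in a..s, r t := by
  have hpos : ∀ᵐ s ∂volume.restrict (Ioc a b), 0 < r s :=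
    (ae_restrict_mem measurableSet_Ioc).mono hr0
  have hgint : IntegrableOn g (Ioc a b) :=
    integrable_of_weight hpos hr (hg.aestronglyMeasurable measurableSet_Ioc) hrg
  refine ⟨w b - ∫ t in Ioc a b, g t, ∫ t in Ioc a b, (r t)⁻¹ * ‖g t‖ ^ 2, fun s hs ↦ ?_⟩
  have hsub : Ioc a s ⊆ Ioc a b := Ioc_subset_Ioc_right hs.2
  have hdiff : w s - (w b - ∫ t in Ioc a b, g t) = ∫ t in Ioc a s, g t := by
    have hftc := integral_eq_sub_of_hasDerivWithinAt_Ioc hw hg hs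
    rw [intervalIntegral.integral_of_le hs.2] at hftc
    rw [← Ioc_union_Ioc_eq_Ioc hs.1.le hs.2, setIntegral_union (Ioc_disjoint_Ioc_of_le le_rfl)
      measurableSet_Ioc (hgint.mono_set hsub) (hgint.mono_set (Ioc_subset_Ioc_left hs.1.le)), hftc]
    abel
  calc ‖w s - (w b - ∫ t in Ioc a b, g t)‖ ^ 2
      ≤ (∫ t in Ioc a s, ‖g t‖) ^ 2 := by
        rw [hdiff]
        gcongr
        exact norm_integral_le_integral_norm _
    _ ≤ (∫ t in Ioc a s, (r t)⁻¹ * ‖g t‖ ^ 2) * ∫ t in Ioc a s, r t :=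
        sq_integral_norm_le_of_weight (ae_restrict_of_ae_restrict_of_subset hsub hpos)
          (hr.mono_set hsub) (hgint.mono_set hsub).aestronglyMeasurable (hrg.mono_set hsub)
    _ ≤ (∫ t in Ioc a b, (r t)⁻¹ * ‖g t‖ ^ 2) * ∫ t in a..s, r t := by
        rw [intervalIntegral.integral_of_le hs.1.le]
        gcongr
        · exact setIntegral_nonneg measurableSet_Ioc fun t ht ↦ (hr0 t (hsub ht)).le
        · filter_upwards [hpos] with t ht
          simp only [Pi.zero_apply]
          positivity

namespace MemMaximalDomain

variable {φ φ₁ g : ℝ → E}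

theorem exists_sq_norm_flux_le [CompleteSpace E] (hφ : MemMaximalDomain p r a b φ φ₁ g)
    (hlp : IsLimitPointAtLeft p r a b) (hab : a < b) (hp : ∀ s ∈ Ioc a b, 0 < p s)
    (hr0 : ∀ s ∈ Ioc a b, 0 < r s) (hrc : ContinuousOn r (Ioc a b))
    (hr : IntegrableOn r (Ioc a b)) :
    ∃ K : ℝ, ∀ s ∈ Ioc a b, ‖p s • φ₁ s‖ ^ 2 ≤ K * ∫ t in a..s, r t := by
  obtain ⟨c, K, hcK⟩ := exists_sq_norm_sub_le_mul_integral hr0 hr hφ.hasDerivWithinAt_flux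
    hφ.continuousOn_deriv_flux hφ.integrableOn_sq_deriv_flux
  have hsq : Tendsto (fun s ↦ ‖p s • φ₁ s - c‖ ^ 2) (𝓝[>] a) (𝓝 0) :=
    squeeze_zero' (.of_forall fun s ↦ by positivity)
      (by filter_upwards [Ioc_mem_nhdsGT hab] with s using hcK s)
      (by simpa using (tendsto_integral_nhdsGT_zero hab hr).const_mul K)
  have hlim : Tendsto (fun s ↦ p s • φ₁ s) (𝓝[>] a) (𝓝 c) :=
    tendsto_iff_norm_sub_tendsto_zero.2 (by simpa using hsq.sqrt)
  obtain rfl := hlp.eq_zero_of_tendsto_flux hab hp hr0 hrc hr hφ.hasDerivWithinAt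
    hφ.integrableOn_sq hlim
  exact ⟨K, by simpa using hcK⟩

theorem continuousOn_energy (hφ : MemMaximalDomain p r a b φ φ₁ g)
    (hp : ∀ s ∈ Ioc a b, 0 < p s) : ContinuousOn (fun s ↦ p s * ‖φ₁ s‖ ^ 2) (Ioc a b) := by
  have hflux : ContinuousOn (fun s ↦ p s • φ₁ s) (Ioc a b) :=
    fun s hs ↦ (hφ.hasDerivWithinAt_flux s hs).continuousWithinAt
  refine (hflux.norm.mul hφ.continuousOn_deriv.norm).congr fun s hs ↦ ?_
  rw [Pi.mul_apply, norm_smul, Real.norm_of_nonneg (hp s hs).le, sq, mul_assoc]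

variable {𝕜 : Type*} [RCLike 𝕜] [InnerProductSpace 𝕜 E]

theorem hasDerivWithinAt_inner_flux [IsScalarTower ℝ 𝕜 E]
    (hφ : MemMaximalDomain p r a b φ φ₁ g) {s : ℝ} (hs : s ∈ Ioc a b) :
    HasDerivWithinAt (fun t ↦ inner 𝕜 (φ t) (p t • φ₁ t))
      (inner 𝕜 (φ s) (g s) + ((p s * ‖φ₁ s‖ ^ 2 : ℝ) : 𝕜)) (Ioc a b) s := by
  refine ((hφ.hasDerivWithinAt s hs).inner 𝕜 (hφ.hasDerivWithinAt_flux s hs)).congr_deriv ?_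
  rw [inner_smul_right_eq_smul, inner_self_eq_norm_sq_to_K, RCLike.real_smul_eq_coe_mul]
  push_cast
  rfl

theorem continuousOn_inner_deriv_flux (hφ : MemMaximalDomain p r a b φ φ₁ g) :
    ContinuousOn (fun s ↦ inner 𝕜 (φ s) (g s)) (Ioc a b) :=
  ContinuousOn.inner (fun s hs ↦ (hφ.hasDerivWithinAt s hs).continuousWithinAt)
    hφ.continuousOn_deriv_flux

theorem integrableOn_inner_deriv_flux (hφ : MemMaximalDomain p r a b φ φ₁ g)
    (hr0 : ∀ s ∈ Ioc a b, 0 < r s) : IntegrableOn (fun s ↦ inner 𝕜 (φ s) (g s)) (Ioc a b) :=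
  integrable_inner_of_weight ((ae_restrict_mem measurableSet_Ioc).mono hr0)
    (ContinuousOn.aestronglyMeasurable
      (fun s hs ↦ (hφ.hasDerivWithinAt s hs).continuousWithinAt) measurableSet_Ioc)
    (hφ.continuousOn_deriv_flux.aestronglyMeasurable measurableSet_Ioc)
    hφ.integrableOn_sq hφ.integrableOn_sq_deriv_flux

theorem mapClusterPt_inner_flux [CompleteSpace E] (hφ : MemMaximalDomain p r a b φ φ₁ g)
    (hlp : IsLimitPointAtLeft p r a b) (hab : a < b) (hp : ∀ s ∈ Ioc a b, 0 < p s)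
    (hr0 : ∀ s ∈ Ioc a b, 0 < r s) (hrc : ContinuousOn r (Ioc a b))
    (hr : IntegrableOn r (Ioc a b)) :
    MapClusterPt 0 (𝓝[>] a) fun s ↦ inner 𝕜 (φ s) (p s • φ₁ s) := by
  obtain ⟨K, hK⟩ := hφ.exists_sq_norm_flux_le hlp hab hp hr0 hrc hr
  refine mapClusterPt_zero_of_sq_norm_le (K := K) hab hrc hr0 hr hφ.integrableOn_sq fun s hs ↦ ?_
  calc ‖inner 𝕜 (φ s) (p s • φ₁ s)‖ ^ 2 ≤ (‖φ s‖ * ‖p s • φ₁ s‖) ^ 2 := by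
        gcongr
        exact norm_inner_le_norm _ _
    _ = ‖p s • φ₁ s‖ ^ 2 * ‖φ s‖ ^ 2 := by ring
    _ ≤ K * (∫ t in a..s, r t) * ‖φ s‖ ^ 2 := by
        gcongr
        exact hK s hs

end MemMaximalDomain

theorem integration_by_parts_no_boundary_term_general {𝕜 : Type*} [RCLike 𝕜]
    [InnerProductSpace 𝕜 E] [IsScalarTower ℝ 𝕜 E] [CompleteSpace E] {φ φ₁ g : ℝ → E}
    (hφ : MemMaximalDomain p r a b φ φ₁ g) (hlp : IsLimitPointAtLeft p r a b) (hab : a < b)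
    (hp : ∀ s ∈ Ioc a b, 0 < p s) (hr0 : ∀ s ∈ Ioc a b, 0 < r s)
    (hrc : ContinuousOn r (Ioc a b)) (hr : IntegrableOn r (Ioc a b)) :
    IntegrableOn (fun s ↦ p s * ‖φ₁ s‖ ^ 2) (Ioc a b) ∧
    ∫ s in Ioc a b, inner 𝕜 (φ s) (-g s) =
      ((∫ s in Ioc a b, p s * ‖φ₁ s‖ ^ 2 : ℝ) : 𝕜) - inner 𝕜 (φ b) (p b • φ₁ b) := by
  have hcross := hφ.integrableOn_inner_deriv_flux (𝕜 := 𝕜) hr0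
  have hcross_cont := hφ.continuousOn_inner_deriv_flux (𝕜 := 𝕜)
  have henergy_cont := hφ.continuousOn_energy hp
  have hderiv := fun s hs ↦ hφ.hasDerivWithinAt_inner_flux (𝕜 := 𝕜) (s := s) hs
  have hcluster := hφ.mapClusterPt_inner_flux (𝕜 := 𝕜) hlp hab hp hr0 hrc hr
  have henergy : IntegrableOn (fun s ↦ p s * ‖φ₁ s‖ ^ 2) (Ioc a b) :=
    integrableOn_Ioc_of_frequently_norm_le hab hderiv hcross_cont henergy_cont
      (fun s hs ↦ mul_nonneg (hp s hs).le (sq_nonneg _)) hcross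
      (by simpa using hcluster.frequently (Metric.closedBall_mem_nhds 0 one_pos))
  refine ⟨henergy, ?_⟩
  have hftc := integral_Ioc_eq_sub_of_mapClusterPt hab hderiv
    (hcross_cont.add (RCLike.continuous_ofReal.comp_continuousOn henergy_cont))
    (hcross.add henergy.ofReal) hcluster
  rw [integral_add hcross henergy.ofReal, integral_ofReal, sub_zero] at hftc
  simp only [inner_neg_right, integral_neg]
  linear_combination -hftc

end SturmLiouville

theorem isLimitPointAtLeft_cube : IsLimitPointAtLeft (fun s ↦ s ^ 3) (fun s ↦ s ^ 3) 0 1 := by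
  refine ⟨fun s ↦ -(s ^ 2)⁻¹ / 2, fun s hs ↦ ?_, ?_⟩
  · have hs0 := hs.1.ne'
    refine (((hasDerivAt_pow 2 s).inv (pow_ne_zero 2 hs0)).neg.div_const 2).hasDerivWithinAt
      |>.congr_deriv ?_
    field_simp
    ring
  · rintro ⟨k, hk, hint⟩
    refine not_integrableOn_of_tendsto_norm_atTop_of_deriv_isBigO_filter (𝓝[>] (0 : ℝ)) hk
      (f := Real.log) ?_ (tendsto_abs_atBot_atTop.comp Real.tendsto_log_nhdsGT_zero) ?_ hint
    · filter_upwards [self_mem_nhdsWithin] with s hs using Real.differentiableAt_log hs.ne'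
    · refine .of_bound 4 ?_
      filter_upwards [self_mem_nhdsWithin] with s (hs : 0 < s)
      have hderiv : deriv Real.log s = 4 * (s ^ 3 * (-(s ^ 2)⁻¹ / 2) ^ 2) := by
        rw [Real.deriv_log]
        field_simp
        norm_num
      rw [hderiv, norm_mul, Real.norm_of_nonneg zero_le_four]

theorem MemDomT.memMaximalDomain {φ φ₁ g : ℝ → ℂ} (hφ : MemDomT φ φ₁ g) :
    MemMaximalDomain (fun s ↦ s ^ 3) (fun s ↦ s ^ 3) 0 1 φ φ₁ g where
  hasDerivWithinAt := hφ.1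
  continuousOn_deriv := hφ.2.1
  hasDerivWithinAt_flux := by simpa [Complex.real_smul] using hφ.2.2.1
  continuousOn_deriv_flux := hφ.2.2.2.1
  integrableOn_sq := hφ.2.2.2.2.1
  integrableOn_sq_deriv_flux := hφ.2.2.2.2.2

/-- For `φ` in the domain of the singular Sturm–Liouville operator,
`∫₀¹ s³ |φ'|² ds < ∞` and the integration-by-parts identity
`∫₀¹ (-(s³φ')') conj(φ) ds = ∫₀¹ s³ |φ'|² ds - φ'(1) conj(φ(1))` holds, with no boundary
contribution at the singular endpoint `s = 0`. -/
theorem integration_by_parts_no_boundary_term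
    (φ φ₁ g : ℝ → ℂ) (hφ : MemDomT φ φ₁ g) :
    IntegrableOn (fun s => s ^ 3 * ‖φ₁ s‖ ^ 2) (Ioc 0 1) ∧
    ∫ s in Ioc (0:ℝ) 1, (-(g s)) * (starRingEnd ℂ) (φ s) =
      ((∫ s in Ioc (0:ℝ) 1, s ^ 3 * ‖φ₁ s‖ ^ 2 : ℝ) : ℂ)
        - φ₁ 1 * (starRingEnd ℂ) (φ 1) := by
  have hcube : ContinuousOn (fun s : ℝ ↦ s ^ 3) (Icc 0 1) := (continuous_pow 3).continuousOn
  have hpos : ∀ s ∈ Ioc (0 : ℝ) 1, 0 < s ^ 3 := fun s hs ↦ pow_pos hs.1 3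
  simpa [RCLike.inner_apply] using integration_by_parts_no_boundary_term_general (𝕜 := ℂ)
    hφ.memMaximalDomain isLimitPointAtLeft_cube zero_lt_one hpos hpos
    (hcube.mono Ioc_subset_Icc_self) (hcube.integrableOn_Icc.mono_set Ioc_subset_Icc_self)
end
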